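/- Let g ∈ W_l and h ∈ W_n with l, n ≥ 0. Then: (i) if l > n, then T_π(gh) = T_π(g)h; (ii) if n > l, then T_π^op(gh) = g T_π^op(h); (iii) if l = n, then P_{≥2}[T_π(gh)] = P_{≥2}[T_π(g)h] and P_{≥2}[T_π^op(gh)] = P_{≥2}[g T_π^op(h)]. -/

import Mathlib

open scoped BigOperators ENNReal

universe u

/-- Ambient data for (the weak*-dense part of) an amalgamated free product
`(A, τ) = *_{i ∈ I, B} (A_i, τ_i)` of finite von Neumann algebras `A_i` with normal faithful
normalized traces over a common von Neumann subalgebra `B`, together with the trace-preserving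
conditional expectation `E : A → B` and the family of noncommutative `L_p`-(matrix) norms
(encoding Pisier's natural operator space structure on `L_p(A)`); the carrier `A` plays the
role of the weak*-dense *-subalgebra `W`, which is linearly spanned by `B` together with the
reduced words in the centered parts of the `A_i`. -/
structure AmalgSetting : Type (u + 1) where
  I : Type u
  A : Type u
  [ringA : Ring A]
  [algA : Algebra ℂ A]
  [starA : StarRing A]
  [smodA : StarModule ℂ A]
  B : Subalgebra ℂ A
  Ai : I → Subalgebra ℂ A
  B_le : ∀ i, B ≤ Ai i
  star_B : ∀ x ∈ B, star x ∈ B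
  star_Ai : ∀ i, ∀ x ∈ Ai i, star x ∈ Ai i
  E : A →ₗ[ℂ] A
  E_mem : ∀ x, E x ∈ B
  E_fix : ∀ x ∈ B, E x = x
  E_bimod : ∀ b₁ ∈ B, ∀ b₂ ∈ B, ∀ x, E (b₁ * x * b₂) = b₁ * E x * b₂
  E_star : ∀ x, E (star x) = star (E x)
  tr : A →ₗ[ℂ] ℂ
  tr_one : tr 1 = 1
  tr_comm : ∀ x y, tr (x * y) = tr (y * x)
  tr_E : ∀ x, tr (E x) = tr x
  tr_pos : ∀ x, 0 ≤ (tr (star x * x)).re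
  tr_faithful : ∀ x, tr (star x * x) = 0 → x = 0
  N : ℝ≥0∞ → (n : ℕ) → Matrix (Fin n) (Fin n) A → ℝ
  N_nonneg : ∀ p n x, 0 ≤ N p n x
  N_add : ∀ p n x y, 1 ≤ p → N p n (x + y) ≤ N p n x + N p n y
  N_smul : ∀ p n (c : ℂ) x, N p n (c • x) = ‖c‖ * N p n x
  N_two : ∀ n (x : Matrix (Fin n) (Fin n) A),
    N 2 n x ^ 2 = ∑ k, ∑ l, (tr (star (x k l) * x k l)).re
  span_words : ∀ x : A, x ∈ Submodule.span ℂ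
      ((B : Set A) ∪ {y | ∃ w : List I, w.Chain' (· ≠ ·) ∧ ∃ a : Fin w.length → A,
        (∀ j, a j ∈ Ai (w.get j) ∧ E (a j) = 0) ∧ y = (List.ofFn a).prod})

attribute [instance] AmalgSetting.ringA AmalgSetting.algA AmalgSetting.starA AmalgSetting.smodA

namespace AmalgSetting

variable (S : AmalgSetting)

/-- The centered part `Å_i = {x ∈ A_i : E x = 0}` of `A_i`. -/
def cent (i : S.I) : Set S.A := {x | x ∈ S.Ai i ∧ S.E x = 0}

/-- `x` is an elementary tensor `a_1 ⊗ ⋯ ⊗ a_n` (realized in `A` as the product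
`a_1 ⋯ a_n` of centered letters) along the word `w = (i_1, …, i_n)`. -/
def IsElemWord (w : List S.I) (x : S.A) : Prop :=
  ∃ a : Fin w.length → S.A, (∀ j, a j ∈ S.cent (w.get j)) ∧ x = (List.ofFn a).prod

/-- A reduced word: adjacent indices are distinct. -/
def Reduced (w : List S.I) : Prop := w.Chain' (· ≠ ·)

/-- The summand `W_{(i_1,…,i_n)} = Å_{i_1} ⊗_B ⋯ ⊗_B Å_{i_n}` of `W` (and `W_{()} = B`). -/
def Wword : List S.I → Submodule ℂ S.A
  | [] => Subalgebra.toSubmodule S.B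
  | w => Submodule.span ℂ {x | S.IsElemWord w x}

/-- The homogeneous part `W_n` of `W`. -/
def Wn (n : ℕ) : Submodule ℂ S.A :=
  ⨆ (w : List S.I) (_ : w.length = n ∧ S.Reduced w), S.Wword w

/-- The scalar `L_p`-norm. -/
def nrm (p : ℝ≥0∞) (x : S.A) : ℝ := S.N p 1 (fun _ _ => x)

/-- `T` is completely bounded on `L_p(A)` with cb-norm at most `C`, i.e. all matrix
amplifications of `T` are bounded by `C` (so that the bounded linear extension of `T` to
`L_p(A)` is completely bounded with `‖T‖_{cb(L_p(A))} ≤ C`). -/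
def IsCBWith (p : ℝ≥0∞) (T : S.A →ₗ[ℂ] S.A) (C : ℝ) : Prop :=
  ∀ (n : ℕ) (x : Matrix (Fin n) (Fin n) S.A), S.N p n (x.map T) ≤ C * S.N p n x

/-- `T` is completely bounded with constant `C` on the subspace `L_p(V)` of `L_p(A)`
corresponding to a subalgebra `V ⊆ A` (e.g. `V = A_i`). -/
def IsCBOnWith (p : ℝ≥0∞) (V : Subalgebra ℂ S.A) (T : S.A →ₗ[ℂ] S.A) (C : ℝ) : Prop :=
  ∀ (n : ℕ) (x : Matrix (Fin n) (Fin n) S.A), (∀ k l, x k l ∈ V) →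
    S.N p n (x.map T) ≤ C * S.N p n x

end AmalgSetting

namespace AmalgSetting

variable (S : AmalgSetting)

/-- The "opposite" companion `T^op(x) = (T(x*))*` of a map `T`. -/
def opConj (T : S.A →ₗ[ℂ] S.A) : S.A →ₗ[ℂ] S.A where
  toFun x := star (T (star x))
  map_add' x y := by simp [star_add, map_add]
  map_smul' c x := by simp [star_smul, map_smul, smul_smul]

/-- A family `π = (π_i)` of *-representations `π_i : A_i → A_i` fixing `B` pointwise
and commuting with the conditional expectation `E`. -/
structure RepFamily where
  π : S.I → S.A →ₗ[ℂ] S.A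
  mem : ∀ i, ∀ x ∈ S.Ai i, π i x ∈ S.Ai i
  map_mul : ∀ i, ∀ x ∈ S.Ai i, ∀ y ∈ S.Ai i, π i (x * y) = π i x * π i y
  map_star : ∀ i, ∀ x ∈ S.Ai i, π i (star x) = star (π i x)
  fix_B : ∀ i, ∀ b ∈ S.B, π i b = b
  E_comm : ∀ i, ∀ x ∈ S.Ai i, S.E (π i x) = S.E x

/-- `T` is the map `T_π` acting on the first letter of reduced words:
`T_π(b) = b` for `b ∈ B`, and `T_π(a_1 ⊗ ⋯ ⊗ a_n) = π_{i_1}(a_1) ⊗ a_2 ⊗ ⋯ ⊗ a_n`. -/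
def IsTpi (P : S.RepFamily) (T : S.A →ₗ[ℂ] S.A) : Prop :=
  (∀ b ∈ S.B, T b = b) ∧
  ∀ w : List S.I, S.Reduced w → ∀ a : Fin w.length → S.A,
    (∀ j, a j ∈ S.cent (w.get j)) →
    T ((List.ofFn a).prod) =
      (List.ofFn fun j : Fin w.length =>
        if (j : ℕ) = 0 then P.π (w.get j) (a j) else a j).prod

/-- `P` is the projection `P_{≥2} = Id − P_0 − P_1` onto words of length at least `2`. -/
def IsPge2 (P : S.A →ₗ[ℂ] S.A) : Prop :=
  (∀ x ∈ S.Wn 0, P x = 0) ∧ (∀ x ∈ S.Wn 1, P x = 0) ∧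
  ∀ n, 2 ≤ n → ∀ x ∈ S.Wn n, P x = x

/-- `P` is the natural projection `P_1 : W → W_1`. -/
def IsP1 (P : S.A →ₗ[ℂ] S.A) : Prop :=
  (∀ x ∈ S.Wn 1, P x = x) ∧ ∀ n, n ≠ 1 → ∀ x ∈ S.Wn n, P x = 0

/-- `Q` is the family of natural projections of `W` onto the word components
`W_{(i_1,…,i_n)}` (with `Q_{()}` the projection onto `B`, i.e. `E`). -/
def IsWordProj (Q : List S.I → S.A →ₗ[ℂ] S.A) : Prop :=
  (∀ w, S.Reduced w → ∀ x ∈ S.Wword w, Q w x = x) ∧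
  (∀ w w', S.Reduced w → S.Reduced w' → w ≠ w' → ∀ x ∈ S.Wword w', Q w x = 0) ∧
  (∀ w, ¬ S.Reduced w → Q w = 0) ∧
  (∀ x, (Function.support fun w => Q w x).Finite) ∧
  (∀ x, ∑ᶠ w, Q w x = x)

end AmalgSetting

namespace AmalgSetting

variable {S : AmalgSetting}

/-- Reduced words of centered letters, as lists of pairs. -/
def Good (S : AmalgSetting) (L : List (S.I × S.A)) : Prop :=
  L.IsChain (fun p q => p.1 ≠ q.1) ∧ ∀ p ∈ L, p.2 ∈ S.cent p.1

/-- The product of the letters. -/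
def wprod (S : AmalgSetting) (L : List (S.I × S.A)) : S.A := (L.map Prod.snd).prod

theorem wprod_nil : wprod S [] = 1 := rfl

theorem wprod_cons (p : S.I × S.A) (L : List (S.I × S.A)) :
    wprod S (p :: L) = p.2 * wprod S L := by simp [wprod]

theorem wprod_append (L M : List (S.I × S.A)) :
    wprod S (L ++ M) = wprod S L * wprod S M := by simp [wprod]

theorem Good.append_left {L M : List (S.I × S.A)} (h : Good S (L ++ M)) : Good S L :=
  ⟨(List.isChain_append.1 h.1).1, fun p hp => h.2 p (by simp [hp])⟩

theorem Good.append_right {L M : List (S.I × S.A)} (h : Good S (L ++ M)) : Good S M :=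
  ⟨(List.isChain_append.1 h.1).2.1, fun p hp => h.2 p (by simp [hp])⟩

theorem Good.reduced {L : List (S.I × S.A)} (h : Good S L) : S.Reduced (L.map Prod.fst) := by
  unfold Reduced
  have := h.1
  exact (List.isChain_map Prod.fst).2 this

theorem ofFn_snd (L : List (S.I × S.A)) :
    List.ofFn (fun j : Fin (L.map Prod.fst).length =>
      (L.get ⟨j, by have := j.2; simpa using this⟩).2) = L.map Prod.snd := by
  apply List.ext_getElem <;> simp

theorem Good.letters {L : List (S.I × S.A)} (h : Good S L) (j : Fin (L.map Prod.fst).length) :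
    (L.get ⟨j, by have := j.2; simpa using this⟩).2 ∈ S.cent ((L.map Prod.fst).get j) := by
  have := h.2 (L.get ⟨j, by have := j.2; simpa using this⟩) (List.get_mem _ _)
  simpa using this

theorem T_cons {P : S.RepFamily} {T : S.A →ₗ[ℂ] S.A} (hT : S.IsTpi P T)
    {p : S.I × S.A} {L : List (S.I × S.A)} (h : Good S (p :: L)) :
    T (wprod S (p :: L)) = P.π p.1 p.2 * wprod S L := by
  have := hT.2 _ h.reduced _ h.letters
  rw [ofFn_snd] at this
  rw [wprod, this]
  have e : ∀ x : S.A, x * wprod S L = (x :: L.map Prod.snd).prod := by simp [wprod]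
  rw [e]
  congr 1
  apply List.ext_getElem
  · simp
  · intro i h1 h2
    cases i <;> simp

theorem T_append {P : S.RepFamily} {T : S.A →ₗ[ℂ] S.A} (hT : S.IsTpi P T)
    {L M : List (S.I × S.A)} (hL : L ≠ []) (h : Good S (L ++ M)) :
    T (wprod S (L ++ M)) = T (wprod S L) * wprod S M := by
  cases L with
  | nil => exact absurd rfl hL
  | cons p L =>
    rw [T_cons hT h.append_left, List.cons_append, T_cons hT (by simpa using h), wprod_append,
      mul_assoc]

theorem E_mul_right {b : S.A} (hb : b ∈ S.B) (x : S.A) : S.E (x * b) = S.E x * b := by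
  simpa using S.E_bimod 1 S.B.one_mem b hb x

theorem E_mul_left {b : S.A} (hb : b ∈ S.B) (x : S.A) : S.E (b * x) = b * S.E x := by
  simpa using S.E_bimod b hb 1 S.B.one_mem x

theorem cent_mul_right {b : S.A} (hb : b ∈ S.B) {i : S.I} {x : S.A} (hx : x ∈ S.cent i) :
    x * b ∈ S.cent i :=
  ⟨(S.Ai i).mul_mem hx.1 (S.B_le i hb), by rw [E_mul_right hb, hx.2, zero_mul]⟩

theorem cent_mul_left {b : S.A} (hb : b ∈ S.B) {i : S.I} {x : S.A} (hx : x ∈ S.cent i) :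
    b * x ∈ S.cent i :=
  ⟨(S.Ai i).mul_mem (S.B_le i hb) hx.1, by rw [E_mul_left hb, hx.2, mul_zero]⟩

theorem cent_sub {i : S.I} {x : S.A} (hx : x ∈ S.Ai i) : x - S.E x ∈ S.cent i :=
  ⟨(S.Ai i).sub_mem hx (S.B_le i (S.E_mem x)), by rw [map_sub, S.E_fix _ (S.E_mem x), sub_self]⟩

/-- Changing the first letter inside its algebra. -/
theorem Good.change_head {p : S.I × S.A} {L : List (S.I × S.A)} (h : Good S (p :: L)) {x : S.A}
    (hx : x ∈ S.cent p.1) : Good S ((p.1, x) :: L) := by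
  refine ⟨?_, ?_⟩
  · have := h.1
    rw [List.isChain_cons] at this ⊢
    exact this
  · intro q hq
    rcases List.mem_cons.1 hq with rfl | hq
    · exact hx
    · exact h.2 q (by simp [hq])

theorem Good.glue {p q : S.I × S.A} {L M : List (S.I × S.A)} (h : Good S (L ++ [p]))
    (h' : Good S (q :: M)) (e : p.1 = q.1) {x : S.A} (hx : x ∈ S.cent p.1) :
    Good S (L ++ (p.1, x) :: M) := by
  have h2 := (e ▸ h'.change_head (e ▸ hx) : Good S ((p.1, x) :: M))
  refine ⟨List.isChain_append.2 ⟨h.append_left.1, h2.1, ?_⟩, ?_⟩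
  · intro a ha b hb
    have := (List.isChain_append.1 h.1).2.2 a ha p (by simp)
    simp at hb
    subst hb
    exact this
  · intro a ha
    rcases List.mem_append.1 ha with ha | ha
    · exact h.append_left.2 a ha
    · exact h2.2 a ha

theorem Good.join {p q : S.I × S.A} {L M : List (S.I × S.A)} (h : Good S (L ++ [p]))
    (h' : Good S (q :: M)) (e : p.1 ≠ q.1) : Good S ((L ++ [p]) ++ q :: M) := by
  refine ⟨List.isChain_append.2 ⟨h.1, h'.1, ?_⟩, ?_⟩
  · intro a ha b hb
    simp at ha hb
    subst ha; subst hb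
    exact e
  · intro a ha
    rcases List.mem_append.1 ha with ha | ha
    · exact h.2 a ha
    · exact h'.2 a ha

theorem T_right {P : S.RepFamily} {T : S.A →ₗ[ℂ] S.A} (hT : S.IsTpi P T)
    {L : List (S.I × S.A)} (h : Good S L) {b : S.A} (hb : b ∈ S.B) :
    T (wprod S L * b) = T (wprod S L) * b := by
  rcases List.eq_nil_or_concat' L with rfl | ⟨L, p, rfl⟩
  · rw [wprod_nil, one_mul, hT.1 b hb, hT.1 1 S.B.one_mem, one_mul]
  · have hp : p.2 ∈ S.cent p.1 := h.2 p (by simp)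
    have hn : Good S (L ++ [(p.1, p.2 * b)]) :=
      Good.glue (q := p) (M := []) h h.append_right rfl (cent_mul_right hb hp)
    have e : wprod S (L ++ [p]) * b = wprod S (L ++ [(p.1, p.2 * b)]) := by
      simp [wprod, mul_assoc]
    rw [e]
    by_cases hL : L = []
    · subst hL
      have e1 := T_cons hT (by simpa using h : Good S (p :: []))
      have e2 := T_cons hT (by simpa using hn : Good S ((p.1, p.2 * b) :: []))
      simp only [List.nil_append]
      rw [e1, e2, wprod_nil, mul_one, mul_one, P.map_mul _ _ hp.1 _ (S.B_le _ hb),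
        P.fix_B _ _ hb]
    · rw [T_append hT hL h, T_append hT hL hn]
      simp [wprod, mul_assoc]

theorem mem_Wn_zero {b : S.A} (hb : b ∈ S.B) : b ∈ S.Wn 0 := by
  unfold Wn
  refine Submodule.mem_iSup_of_mem [] (Submodule.mem_iSup_of_mem ⟨rfl, ?_⟩ ?_)
  · exact List.IsChain.nil
  · simpa [Wword] using hb

theorem Good.mem_Wn {L : List (S.I × S.A)} (h : Good S L) : wprod S L ∈ S.Wn L.length := by
  cases L with
  | nil => exact mem_Wn_zero S.B.one_mem
  | cons p L =>
    refine Submodule.mem_iSup_of_mem ((p :: L).map Prod.fst)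
      (Submodule.mem_iSup_of_mem ⟨by simp, h.reduced⟩ ?_)
    have : S.IsElemWord ((p :: L).map Prod.fst) (wprod S (p :: L)) :=
      ⟨_, h.letters, by rw [ofFn_snd]; rfl⟩
    exact Submodule.subset_span this

theorem Wn_le (n : ℕ) : S.Wn n ≤ Submodule.span ℂ
    {x | (n = 0 ∧ x ∈ S.B) ∨ ∃ L, Good S L ∧ L.length = n ∧ x = wprod S L} := by
  refine iSup_le fun w => iSup_le fun hw => ?_
  obtain ⟨rfl, hr⟩ := hw
  cases w with
  | nil =>
    intro x hx
    exact Submodule.subset_span (Or.inl ⟨rfl, by simpa [Wword] using hx⟩)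
  | cons i w =>
    refine Submodule.span_mono ?_
    rintro x ⟨a, ha, rfl⟩
    right
    have e1 : (List.ofFn fun j => ((i :: w).get j, a j)).map Prod.fst = i :: w := by
      apply List.ext_getElem
      · simp
      · intro k h1 h2
        simp only [List.getElem_map, List.getElem_ofFn, List.get_eq_getElem]
    have e2 : (List.ofFn fun j => ((i :: w).get j, a j)).map Prod.snd = List.ofFn a := by
      apply List.ext_getElem
      · simp
      · intro k h1 h2
        simp only [List.getElem_map, List.getElem_ofFn, List.get_eq_getElem]
    refine ⟨List.ofFn fun j => ((i :: w).get j, a j), ⟨?_, ?_⟩, by simp, ?_⟩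
    · have hr' : List.IsChain (· ≠ ·) (i :: w) := hr
      rw [← e1, List.isChain_map] at hr'
      exact hr'
    · intro p hp
      rw [List.mem_ofFn] at hp
      obtain ⟨j, rfl⟩ := hp
      exact ha j
    · rw [wprod, e2]

theorem Ai_le {i : S.I} {x : S.A} (hx : x ∈ S.Ai i) : x ∈ S.Wn 0 ⊔ S.Wn 1 := by
  refine Submodule.mem_sup.2 ⟨S.E x, mem_Wn_zero (S.E_mem x), x - S.E x, ?_, by abel⟩
  have : Good S [(i, x - S.E x)] := ⟨by simp, by
    intro p hp
    simp at hp
    subst hp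
    exact cent_sub hx⟩
  simpa [wprod] using this.mem_Wn

theorem star_cent {i : S.I} {x : S.A} (hx : x ∈ S.cent i) : star x ∈ S.cent i :=
  ⟨S.star_Ai i x hx.1, by rw [S.E_star, hx.2, star_zero]⟩

theorem star_Wn {n : ℕ} {x : S.A} (hx : x ∈ S.Wn n) : star x ∈ S.Wn n := by
  have hx' := Wn_le n hx
  clear hx
  induction hx' using Submodule.span_induction with
  | mem x h =>
    rcases h with ⟨rfl, hb⟩ | ⟨L, hL, rfl, rfl⟩
    · exact mem_Wn_zero (S.star_B x hb)
    · have hg : Good S (L.reverse.map fun p => (p.1, star p.2)) := by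
        refine ⟨?_, ?_⟩
        · rw [List.isChain_map, List.isChain_reverse]
          exact hL.1.imp fun a b h => h.symm
        · intro p hp
          simp at hp
          obtain ⟨i, a, hm, rfl⟩ := hp
          exact star_cent (hL.2 _ hm)
      have e : star (wprod S L) = wprod S (L.reverse.map fun p => (p.1, star p.2)) := by
        clear hL hg
        induction L with
        | nil => simp [wprod]
        | cons p L ih =>
          rw [wprod_cons, star_mul, ih]
          simp [wprod]
      rw [e]
      simpa using hg.mem_Wn
  | zero => simp
  | add x y _ _ h1 h2 =>
    rw [star_add]
    exact Submodule.add_mem _ h1 h2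
  | smul c x _ h1 =>
    rw [star_smul]
    exact Submodule.smul_mem _ _ h1

theorem main_words {P : S.RepFamily} {T : S.A →ₗ[ℂ] S.A} (hT : S.IsTpi P T)
    (V : Submodule ℂ S.A) (M : List (S.I × S.A)) :
    ∀ (L : List (S.I × S.A)) (b : S.A), b ∈ S.B → Good S L → Good S M → M.length ≤ L.length →
      (L.length = M.length → S.Wn 0 ⊔ S.Wn 1 ≤ V) →
      T (wprod S L * (b * wprod S M)) - T (wprod S L) * (b * wprod S M) ∈ V := by
  induction M with
  | nil =>
    intro L b hb hL hM hlen hV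
    rw [wprod_nil, mul_one, T_right hT hL hb, sub_self]
    exact V.zero_mem
  | cons q M ih =>
    intro L b hb hL hM hlen hV
    rcases List.eq_nil_or_concat' L with rfl | ⟨L, p, rfl⟩
    · simp at hlen
    have hp : p.2 ∈ S.cent p.1 := hL.2 p (by simp)
    have hq : b * q.2 ∈ S.cent q.1 := cent_mul_left hb (hM.2 q (by simp))
    have hM' := hM.change_head hq
    have e0 : b * wprod S (q :: M) = wprod S ((q.1, b * q.2) :: M) := by
      simp [wprod, mul_assoc]
    by_cases e : p.1 = q.1
    · have hpq : p.2 * (b * q.2) ∈ S.Ai p.1 := (S.Ai p.1).mul_mem hp.1 (e ▸ hq.1)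
      by_cases hn : L = []
      · subst hn
        have hM0 : M = [] := by
          simp at hlen
          exact hlen
        subst hM0
        have hV' := hV (by simp)
        have hs : Good S [(p.1, p.2 * (b * q.2) - S.E (p.2 * (b * q.2)))] :=
          Good.glue (L := []) hL hM e (cent_sub hpq)
        have t1 := T_cons hT hs
        have t2 := T_cons hT (by simpa using hL : Good S (p :: []))
        rw [wprod_nil, mul_one] at t1 t2
        simp only [List.nil_append]
        rw [t2, e0]
        simp only [wprod, List.map_cons, List.map_nil, List.prod_cons, List.prod_nil, mul_one]
          at t1 ⊢
        rw [map_sub, hT.1 _ (S.E_mem _), map_sub, P.fix_B _ _ (S.E_mem _), sub_left_inj] at t1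
        rw [t1]
        apply hV'
        apply Submodule.sub_mem
        · exact Ai_le (P.mem _ _ hpq)
        · exact Ai_le ((S.Ai p.1).mul_mem (P.mem _ _ hp.1) (e ▸ hq.1))
      · have hd := Good.glue hL hM e (cent_sub hpq)
        have t1 := T_append hT hn hd
        have t2 := T_append hT hn hL
        have t3 := ih L (S.E (p.2 * (b * q.2))) (S.E_mem _) hL.append_left
          (Good.append_right (L := [q]) hM) (by simpa using hlen)
          (fun h => hV (by simp [h]))
        have r1 : wprod S (L ++ [p]) * (b * wprod S (q :: M)) =
            wprod S (L ++ (p.1, p.2 * (b * q.2) - S.E (p.2 * (b * q.2))) :: M) +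
              wprod S L * (S.E (p.2 * (b * q.2)) * wprod S M) := by
          simp only [wprod_append, wprod_cons, wprod_nil]
          noncomm_ring
        rw [r1, map_add, t1, t2]
        convert t3 using 1
        simp only [wprod_cons, wprod_nil]
        noncomm_ring
    · have hj := Good.join hL hM' e
      have := T_append hT (by simp) hj
      rw [wprod_append] at this
      rw [e0, this, sub_self]
      exact V.zero_mem

theorem main_diff {P : S.RepFamily} {T : S.A →ₗ[ℂ] S.A} (hT : S.IsTpi P T)
    (V : Submodule ℂ S.A) {l n : ℕ} (hln : n ≤ l) (hV : l = n → S.Wn 0 ⊔ S.Wn 1 ≤ V)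
    {g h : S.A} (hg : g ∈ S.Wn l) (hh : h ∈ S.Wn n) :
    T (g * h) - T g * h ∈ V := by
  have hg' := Wn_le l hg
  have hh' := Wn_le n hh
  clear hg hh
  induction hg' using Submodule.span_induction with
  | zero => simp
  | add x y _ _ h1 h2 =>
    convert V.add_mem h1 h2 using 1
    rw [add_mul, map_add, map_add, add_mul]
    abel
  | smul c x _ h1 =>
    convert V.smul_mem c h1 using 1
    rw [smul_mul_assoc, map_smul, map_smul, smul_mul_assoc, smul_sub]
  | mem g hg =>
    induction hh' using Submodule.span_induction with
    | zero => simp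
    | add x y _ _ h1 h2 =>
      convert V.add_mem h1 h2 using 1
      rw [mul_add, map_add, mul_add]
      abel
    | smul c x _ h1 =>
      convert V.smul_mem c h1 using 1
      rw [mul_smul_comm, map_smul, mul_smul_comm, smul_sub]
    | mem h hh =>
      have key : ∀ L, Good S L → L.length = l → T (wprod S L * h) - T (wprod S L) * h ∈ V := by
        rintro L hL rfl
        rcases hh with ⟨rfl, hb⟩ | ⟨M, hM, rfl, rfl⟩
        · rw [T_right hT hL hb, sub_self]
          exact V.zero_mem
        · simpa using main_words hT V M L 1 S.B.one_mem hL hM hln hV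
      rcases hg with ⟨rfl, hb⟩ | ⟨L, hL, hl, rfl⟩
      · have hn : n = 0 := by omega
        subst hn
        have hhB : h ∈ S.B := by
          rcases hh with ⟨_, hb⟩ | ⟨M, hM, hl, rfl⟩
          · exact hb
          · rw [List.length_eq_zero_iff.1 hl]
            exact S.B.one_mem
        rw [hT.1 _ hb, hT.1 _ (S.B.mul_mem hb hhB), sub_self]
        exact V.zero_mem
      · exact key L hL hl

end AmalgSetting

open AmalgSetting in
/-- Lemma `rel1`: for `g ∈ W_l`, `h ∈ W_n`:
(i) if `l > n` then `T_π(gh) = T_π(g)h`; (ii) if `n > l` then `T_π^op(gh) = g T_π^op(h)`;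
(iii) if `l = n` then `P_{≥2}[T_π(gh)] = P_{≥2}[T_π(g)h]` and
`P_{≥2}[T_π^op(gh)] = P_{≥2}[g T_π^op(h)]`. -/
theorem first_letter_map_word_relations (S : AmalgSetting) (P : S.RepFamily)
    (Tpi : S.A →ₗ[ℂ] S.A) (hT : S.IsTpi P Tpi)
    (Pge2 : S.A →ₗ[ℂ] S.A) (hP : S.IsPge2 Pge2)
    (l n : ℕ) (g h : S.A) (hg : g ∈ S.Wn l) (hh : h ∈ S.Wn n) :
    (l > n → Tpi (g * h) = Tpi g * h) ∧
    (n > l → S.opConj Tpi (g * h) = g * S.opConj Tpi h) ∧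
    (l = n → Pge2 (Tpi (g * h)) = Pge2 (Tpi g * h) ∧
      Pge2 (S.opConj Tpi (g * h)) = Pge2 (g * S.opConj Tpi h)) := by
  have kill : ∀ x ∈ S.Wn 0 ⊔ S.Wn 1, Pge2 x = 0 := by
    intro x hx
    obtain ⟨y, hy, z, hz, rfl⟩ := Submodule.mem_sup.1 hx
    rw [map_add, hP.1 y hy, hP.2.1 z hz, add_zero]
  have star01 : ∀ x ∈ S.Wn 0 ⊔ S.Wn 1, star x ∈ S.Wn 0 ⊔ S.Wn 1 := by
    intro x hx
    obtain ⟨y, hy, z, hz, rfl⟩ := Submodule.mem_sup.1 hx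
    rw [star_add]
    exact Submodule.mem_sup.2 ⟨_, star_Wn hy, _, star_Wn hz, rfl⟩
  have hop : ∀ x, S.opConj Tpi x = star (Tpi (star x)) := fun x => rfl
  have eop : S.opConj Tpi (g * h) - g * S.opConj Tpi h =
      star (Tpi (star h * star g) - Tpi (star h) * star g) := by
    rw [hop, hop, star_mul, star_sub, star_mul (Tpi (star h)), star_star]
  refine ⟨fun hl => ?_, fun hl => ?_, fun hl => ⟨?_, ?_⟩⟩
  · have := main_diff hT ⊥ hl.le (fun e => by omega) hg hh
    exact sub_eq_zero.1 ((Submodule.mem_bot ℂ).1 this)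
  · have := main_diff hT ⊥ hl.le (fun e => by omega) (star_Wn hh) (star_Wn hg)
    rw [(Submodule.mem_bot ℂ).1 this, star_zero] at eop
    exact sub_eq_zero.1 eop
  · have := main_diff hT (S.Wn 0 ⊔ S.Wn 1) hl.ge (fun _ => le_rfl) hg hh
    rw [← sub_eq_zero, ← map_sub]
    exact kill _ this
  · have := main_diff hT (S.Wn 0 ⊔ S.Wn 1) hl.le (fun _ => le_rfl) (star_Wn hh) (star_Wn hg)
    rw [← sub_eq_zero, ← map_sub, eop]
    exact kill _ (star01 _ this)
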